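/- Let (π : A → B, ⊞, 0) be as in the context, and for b,b' ∈ B define the maps l(b,b')u := Σ (b₍₁₎b'₍₁₎)\(b₍₂₎·(b'₍₂₎u)), r(b,b')u := Σ ((ub₍₁₎)·b'₍₁₎)/(b₍₂₎b'₍₂₎), t(b)u := Σ b₍₁₎\(ub₍₂₎), s(b,b')u := Σ (b₍₁₎·(ub'₍₁₎))/(b₍₂₎b'₍₂₎), s̄(b,b')u := Σ (b₍₁₎b'₍₁₎)\((b₍₂₎u)·b'₍₂₎), t̄(b)u := Σ (b₍₁₎u)/b₍₂₎ (elements of B acting on A through 0). Then for all x, x' ∈ F(A) and b, b' ∈ B, and for each φ among l, r, s, s̄: φ(b,b')(x·x') = Σ φ(b₍₁₎,b'₍₁₎)x · φ(b₍₂₎,b'₍₂₎)x'; moreover t(b)(x·x') = Σ t(b₍₁₎)x · t(b₍₂₎)x' and t̄(b)(x·x') = Σ t̄(b₍₁₎)x · t̄(b₍₂₎)x'. -/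

import Mathlib

open TensorProduct

namespace FormalLoops

variable (k : Type*) [Field k]

/-- A unital, not necessarily associative, bialgebra with left and right divisions:
a cocommutative coassociative counital coalgebra together with a bilinear unital
multiplication and bilinear left/right divisions which are coalgebra morphisms and
satisfy the division cancellation laws (in Sweedler form). -/
structure DivBialg (A : Type*) [AddCommGroup A] [Module k A] where
  Δ : A →ₗ[k] A ⊗[k] A
  ε : A →ₗ[k] k
  mul : A →ₗ[k] A →ₗ[k] A
  one : A
  ld : A →ₗ[k] A →ₗ[k] A
  rd : A →ₗ[k] A →ₗ[k] A
  coassoc : ∀ u : A, (TensorProduct.assoc k A A A) ((Δ.rTensor A) (Δ u)) = (Δ.lTensor A) (Δ u)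
  counit_left : ∀ u : A, (TensorProduct.lid k A) ((ε.rTensor A) (Δ u)) = u
  counit_right : ∀ u : A, (TensorProduct.rid k A) ((ε.lTensor A) (Δ u)) = u
  cocomm : ∀ u : A, (TensorProduct.comm k A A) (Δ u) = Δ u
  Δ_one : Δ one = one ⊗ₜ[k] one
  ε_one : ε one = 1
  one_mul : ∀ u, mul one u = u
  mul_one : ∀ u, mul u one = u
  Δ_mul : ∀ u v, Δ (mul u v) = TensorProduct.map₂ mul mul (Δ u) (Δ v)
  ε_mul : ∀ u v, ε (mul u v) = ε u * ε v
  Δ_ld : ∀ u v, Δ (ld u v) = TensorProduct.map₂ ld ld (Δ u) (Δ v)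
  ε_ld : ∀ u v, ε (ld u v) = ε u * ε v
  Δ_rd : ∀ u v, Δ (rd u v) = TensorProduct.map₂ rd rd (Δ u) (Δ v)
  ε_rd : ∀ u v, ε (rd u v) = ε u * ε v
  /-- Σ u₍₁₎\(u₍₂₎v) = ε(u)v -/
  ld_mul_cancel : ∀ u v, TensorProduct.lift ld ((LinearMap.lTensor A (mul.flip v)) (Δ u)) = ε u • v
  /-- Σ u₍₁₎(u₍₂₎\v) = ε(u)v -/
  mul_ld_cancel : ∀ u v, TensorProduct.lift mul ((LinearMap.lTensor A (ld.flip v)) (Δ u)) = ε u • v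
  /-- Σ (vu₍₁₎)/u₍₂₎ = ε(u)v -/
  rd_mul_cancel : ∀ u v, TensorProduct.lift rd ((LinearMap.rTensor A (mul v)) (Δ u)) = ε u • v
  /-- Σ (v/u₍₁₎)u₍₂₎ = ε(u)v -/
  mul_rd_cancel : ∀ u v, TensorProduct.lift mul ((LinearMap.rTensor A (rd v)) (Δ u)) = ε u • v

variable {A B : Type*} [AddCommGroup A] [Module k A] [AddCommGroup B] [Module k B]

/-- A morphism of unital bialgebras with divisions. -/
structure DivBialgHom (SA : DivBialg k A) (SB : DivBialg k B) (π : A →ₗ[k] B) : Prop where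
  map_Δ : ∀ u, TensorProduct.map π π (SA.Δ u) = SB.Δ (π u)
  map_ε : ∀ u, SB.ε (π u) = SA.ε u
  map_mul : ∀ u v, π (SA.mul u v) = SB.mul (π u) (π v)
  map_one : π SA.one = SB.one
  map_ld : ∀ u v, π (SA.ld u v) = SB.ld (π u) (π v)
  map_rd : ∀ u v, π (SA.rd u v) = SB.rd (π u) (π v)

/-- `D` is a subcoalgebra w.r.t. the comultiplication `Δ`: `Δ(D) ⊆ D ⊗ D`. -/
def IsSubcoalg {M : Type*} [AddCommGroup M] [Module k M] (Δ : M →ₗ[k] M ⊗[k] M)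
    (D : Submodule k M) : Prop :=
  ∀ x ∈ D, Δ x ∈ LinearMap.range (TensorProduct.map D.subtype D.subtype)

/-- `F(A)`: the sum of all subcoalgebras `D ⊆ A` on which `π = ε(·) • 1`. -/
def Fsub (SA : DivBialg k A) (oneB : B) (π : A →ₗ[k] B) : Submodule k A :=
  sSup {D : Submodule k A | IsSubcoalg k SA.Δ D ∧ ∀ x ∈ D, π x = SA.ε x • oneB}

end FormalLoops

namespace FormalLoops

variable (k : Type*) [Field k]
variable {A B : Type*} [AddCommGroup A] [Module k A] [AddCommGroup B] [Module k B]

/-- Core of the Sweedler-type operators `u ↦ Σ d(α(b₍₁₎,b'₍₁₎), β(b₍₂₎,b'₍₂₎,u))`. -/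
noncomputable def sweedCoreL (d : A →ₗ[k] A →ₗ[k] A) (α : B →ₗ[k] B →ₗ[k] A)
    (β : B →ₗ[k] B →ₗ[k] A →ₗ[k] A) :
    ((B ⊗[k] B) ⊗[k] (B ⊗[k] B)) ⊗[k] A →ₗ[k] A :=
  TensorProduct.lift d ∘ₗ
  TensorProduct.map (TensorProduct.lift α) (TensorProduct.lift (TensorProduct.lift β)) ∘ₗ
  (TensorProduct.assoc k (B ⊗[k] B) (B ⊗[k] B) A).toLinearMap ∘ₗ
  LinearMap.rTensor A (TensorProduct.tensorTensorTensorComm k B B B B).toLinearMap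

/-- Core of the Sweedler-type operators `u ↦ Σ d(β(b₍₁₎,b'₍₁₎,u), α(b₍₂₎,b'₍₂₎))`. -/
noncomputable def sweedCoreR (d : A →ₗ[k] A →ₗ[k] A) (α : B →ₗ[k] B →ₗ[k] A)
    (β : B →ₗ[k] B →ₗ[k] A →ₗ[k] A) :
    ((B ⊗[k] B) ⊗[k] (B ⊗[k] B)) ⊗[k] A →ₗ[k] A :=
  TensorProduct.lift d.flip ∘ₗ
  TensorProduct.map (TensorProduct.lift α) (TensorProduct.lift (TensorProduct.lift β)) ∘ₗ
  (TensorProduct.assoc k (B ⊗[k] B) (B ⊗[k] B) A).toLinearMap ∘ₗ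
  LinearMap.rTensor A ((TensorProduct.comm k (B ⊗[k] B) (B ⊗[k] B)).toLinearMap ∘ₗ
    (TensorProduct.tensorTensorTensorComm k B B B B).toLinearMap)

/-- Core of the one-variable Sweedler-type operators `u ↦ Σ d(γ(b₍₁₎), δ(b₍₂₎,u))`. -/
noncomputable def sweedCore1L (d : A →ₗ[k] A →ₗ[k] A) (γ : B →ₗ[k] A)
    (δ : B →ₗ[k] A →ₗ[k] A) : (B ⊗[k] B) ⊗[k] A →ₗ[k] A :=
  TensorProduct.lift d ∘ₗ TensorProduct.map γ (TensorProduct.lift δ) ∘ₗ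
  (TensorProduct.assoc k B B A).toLinearMap

/-- Core of the one-variable Sweedler-type operators `u ↦ Σ d(δ(b₍₁₎,u), γ(b₍₂₎))`. -/
noncomputable def sweedCore1R (d : A →ₗ[k] A →ₗ[k] A) (γ : B →ₗ[k] A)
    (δ : B →ₗ[k] A →ₗ[k] A) : (B ⊗[k] B) ⊗[k] A →ₗ[k] A :=
  TensorProduct.lift d.flip ∘ₗ TensorProduct.map γ (TensorProduct.lift δ) ∘ₗ
  (TensorProduct.assoc k B B A).toLinearMap ∘ₗ
  LinearMap.rTensor A (TensorProduct.comm k B B).toLinearMap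

/-- `l(b,b') : u ↦ Σ (b₍₁₎b'₍₁₎)\(b₍₂₎·(b'₍₂₎u))`, where `B` acts through `z`. -/
noncomputable def opL (S : DivBialg k A) (ΔB : B →ₗ[k] B ⊗[k] B) (z : B →ₗ[k] A)
    (b b' : B) : A →ₗ[k] A :=
  sweedCoreL k S.ld (S.mul.compl₁₂ z z)
      ((LinearMap.llcomp k A A A).compl₁₂ (S.mul ∘ₗ z) (S.mul ∘ₗ z)) ∘ₗ
    TensorProduct.mk k ((B ⊗[k] B) ⊗[k] (B ⊗[k] B)) A (ΔB b ⊗ₜ[k] ΔB b')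

/-- `r(b,b') : u ↦ Σ ((ub₍₁₎)·b'₍₁₎)/(b₍₂₎b'₍₂₎)`. -/
noncomputable def opR (S : DivBialg k A) (ΔB : B →ₗ[k] B ⊗[k] B) (z : B →ₗ[k] A)
    (b b' : B) : A →ₗ[k] A :=
  sweedCoreR k S.rd (S.mul.compl₁₂ z z)
      (((LinearMap.llcomp k A A A).compl₁₂ (S.mul.flip ∘ₗ z) (S.mul.flip ∘ₗ z)).flip) ∘ₗ
    TensorProduct.mk k ((B ⊗[k] B) ⊗[k] (B ⊗[k] B)) A (ΔB b ⊗ₜ[k] ΔB b')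

/-- `s(b,b') : u ↦ Σ (b₍₁₎·(ub'₍₁₎))/(b₍₂₎b'₍₂₎)`. -/
noncomputable def opS (S : DivBialg k A) (ΔB : B →ₗ[k] B ⊗[k] B) (z : B →ₗ[k] A)
    (b b' : B) : A →ₗ[k] A :=
  sweedCoreR k S.rd (S.mul.compl₁₂ z z)
      ((LinearMap.llcomp k A A A).compl₁₂ (S.mul ∘ₗ z) (S.mul.flip ∘ₗ z)) ∘ₗ
    TensorProduct.mk k ((B ⊗[k] B) ⊗[k] (B ⊗[k] B)) A (ΔB b ⊗ₜ[k] ΔB b')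

/-- `s̄(b,b') : u ↦ Σ (b₍₁₎b'₍₁₎)\((b₍₂₎u)·b'₍₂₎)`. -/
noncomputable def opSbar (S : DivBialg k A) (ΔB : B →ₗ[k] B ⊗[k] B) (z : B →ₗ[k] A)
    (b b' : B) : A →ₗ[k] A :=
  sweedCoreL k S.ld (S.mul.compl₁₂ z z)
      (((LinearMap.llcomp k A A A).compl₁₂ (S.mul.flip ∘ₗ z) (S.mul ∘ₗ z)).flip) ∘ₗ
    TensorProduct.mk k ((B ⊗[k] B) ⊗[k] (B ⊗[k] B)) A (ΔB b ⊗ₜ[k] ΔB b')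

/-- `t(b) : u ↦ Σ b₍₁₎\(ub₍₂₎)`. -/
noncomputable def opT (S : DivBialg k A) (ΔB : B →ₗ[k] B ⊗[k] B) (z : B →ₗ[k] A)
    (b : B) : A →ₗ[k] A :=
  sweedCore1L k S.ld z (S.mul.flip ∘ₗ z) ∘ₗ TensorProduct.mk k (B ⊗[k] B) A (ΔB b)

/-- `t̄(b) : u ↦ Σ (b₍₁₎u)/b₍₂₎`. -/
noncomputable def opTbar (S : DivBialg k A) (ΔB : B →ₗ[k] B ⊗[k] B) (z : B →ₗ[k] A)
    (b : B) : A →ₗ[k] A :=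
  sweedCore1R k S.rd z (S.mul ∘ₗ z) ∘ₗ TensorProduct.mk k (B ⊗[k] B) A (ΔB b)

/-- `x` is a primitive element of the bialgebra. -/
def IsPrimitive (S : DivBialg k A) (x : A) : Prop :=
  S.Δ x = x ⊗ₜ[k] S.one + S.one ⊗ₜ[k] x

end FormalLoops

namespace FormalLoops

variable (k : Type*) [Field k]
variable {A B : Type*} [AddCommGroup A] [Module k A] [AddCommGroup B] [Module k B]

/-- The comultiplication of the tensor-product coalgebra `A ⊗ A`. -/
noncomputable def tcomul (SA : DivBialg k A) :
    A ⊗[k] A →ₗ[k] (A ⊗[k] A) ⊗[k] (A ⊗[k] A) :=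
  (TensorProduct.tensorTensorTensorComm k A A A A).toLinearMap ∘ₗ
    TensorProduct.map SA.Δ SA.Δ

/-- The counit of the tensor-product coalgebra `A ⊗ A`. -/
noncomputable def tcounit (SA : DivBialg k A) : A ⊗[k] A →ₗ[k] k :=
  (TensorProduct.lid k k).toLinearMap ∘ₗ TensorProduct.map SA.ε SA.ε

/-- The linear map `A ⊗ A → B`, `u ⊗ v ↦ ε(v) π(u)`. -/
noncomputable def pbFst (SA : DivBialg k A) (π : A →ₗ[k] B) : A ⊗[k] A →ₗ[k] B :=
  (TensorProduct.rid k B).toLinearMap ∘ₗ TensorProduct.map π SA.ε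

/-- The linear map `A ⊗ A → B`, `u ⊗ v ↦ ε(u) π(v)`. -/
noncomputable def pbSnd (SA : DivBialg k A) (π : A →ₗ[k] B) : A ⊗[k] A →ₗ[k] B :=
  (TensorProduct.lid k B).toLinearMap ∘ₗ TensorProduct.map SA.ε π

/-- The pullback `A ⊗_B A`: the sum of all subcoalgebras of the tensor-product
coalgebra `A ⊗ A` on which `u ⊗ v ↦ ε(v)π(u)` and `u ⊗ v ↦ ε(u)π(v)` agree. -/
noncomputable def pbSub (SA : DivBialg k A) (π : A →ₗ[k] B) : Submodule k (A ⊗[k] A) :=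
  sSup {C : Submodule k (A ⊗[k] A) | IsSubcoalg k (tcomul k SA) C ∧
    ∀ t ∈ C, pbFst k SA π t = pbSnd k SA π t}

/-- The data of an abelian group `(π : A → B, ⊞, 0)` in the comma category over `B`:
a linear map `⊞ = bp : A ⊗_B A → A` which lies over `B`, is a coalgebra morphism
(witnessed by a corestriction `Δpb` of the comultiplication of `A ⊗ A` to `A ⊗_B A`),
is multiplicative, commutative, associative on `F(A)` and has `0 = z ∘ π` as unit. -/
structure BoxPlusData (SA : DivBialg k A) (SB : DivBialg k B)
    (π : A →ₗ[k] B) (z : B →ₗ[k] A) where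
  bp : ↥(pbSub k SA π) →ₗ[k] A
  Δpb : ↥(pbSub k SA π) →ₗ[k] (↥(pbSub k SA π) ⊗[k] ↥(pbSub k SA π))
  Δpb_compat : ∀ t : pbSub k SA π,
    TensorProduct.map (pbSub k SA π).subtype (pbSub k SA π).subtype (Δpb t)
      = tcomul k SA (t : A ⊗[k] A)
  π_bp : ∀ t : pbSub k SA π, π (bp t) = pbFst k SA π (t : A ⊗[k] A)
  Δ_bp : ∀ t : pbSub k SA π, SA.Δ (bp t) = TensorProduct.map bp bp (Δpb t)
  ε_bp : ∀ t : pbSub k SA π, SA.ε (bp t) = tcounit k SA (t : A ⊗[k] A)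
  bp_mul : ∀ (t t' : pbSub k SA π)
      (h : TensorProduct.map₂ SA.mul SA.mul (t : A ⊗[k] A) (t' : A ⊗[k] A) ∈ pbSub k SA π),
      bp ⟨TensorProduct.map₂ SA.mul SA.mul (t : A ⊗[k] A) (t' : A ⊗[k] A), h⟩
        = SA.mul (bp t) (bp t')
  bp_flip : ∀ (t : pbSub k SA π)
      (h : (TensorProduct.comm k A A) (t : A ⊗[k] A) ∈ pbSub k SA π),
      bp ⟨(TensorProduct.comm k A A) (t : A ⊗[k] A), h⟩ = bp t
  bp_assoc : ∀ x ∈ Fsub k SA SB.one π, ∀ y ∈ Fsub k SA SB.one π, ∀ w ∈ Fsub k SA SB.one π,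
      ∀ (h1 : x ⊗ₜ[k] y ∈ pbSub k SA π) (h2 : y ⊗ₜ[k] w ∈ pbSub k SA π)
        (h3 : (bp ⟨x ⊗ₜ[k] y, h1⟩) ⊗ₜ[k] w ∈ pbSub k SA π)
        (h4 : x ⊗ₜ[k] (bp ⟨y ⊗ₜ[k] w, h2⟩) ∈ pbSub k SA π),
      bp ⟨(bp ⟨x ⊗ₜ[k] y, h1⟩) ⊗ₜ[k] w, h3⟩ = bp ⟨x ⊗ₜ[k] (bp ⟨y ⊗ₜ[k] w, h2⟩), h4⟩
  bp_unit_right : ∀ (u : A)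
      (h : (LinearMap.lTensor A (z ∘ₗ π)) (SA.Δ u) ∈ pbSub k SA π),
      bp ⟨(LinearMap.lTensor A (z ∘ₗ π)) (SA.Δ u), h⟩ = u
  bp_unit_left : ∀ (u : A)
      (h : (LinearMap.rTensor A (z ∘ₗ π)) (SA.Δ u) ∈ pbSub k SA π),
      bp ⟨(LinearMap.rTensor A (z ∘ₗ π)) (SA.Δ u), h⟩ = u

end FormalLoops

namespace FormalLoops

variable (k : Type*) [Field k]
variable {A B : Type*} [AddCommGroup A] [Module k A] [AddCommGroup B] [Module k B]

/-- For a fixed `x : A`, the linear map `b ⊗ b' ↦ (op(b,b'))(x)` associated with a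
Sweedler-type operator core. -/
noncomputable def hatOf (core : ((B ⊗[k] B) ⊗[k] (B ⊗[k] B)) ⊗[k] A →ₗ[k] A)
    (ΔB : B →ₗ[k] B ⊗[k] B) (x : A) : B ⊗[k] B →ₗ[k] A :=
  core ∘ₗ (TensorProduct.mk k ((B ⊗[k] B) ⊗[k] (B ⊗[k] B)) A).flip x ∘ₗ
    TensorProduct.map ΔB ΔB

/-- For a fixed `x : A`, the linear map `b ↦ (op(b))(x)` associated with a one-variable
Sweedler-type operator core. -/
noncomputable def hat1Of (core : (B ⊗[k] B) ⊗[k] A →ₗ[k] A)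
    (ΔB : B →ₗ[k] B ⊗[k] B) (x : A) : B →ₗ[k] A :=
  core ∘ₗ (TensorProduct.mk k (B ⊗[k] B) A).flip x ∘ₗ ΔB

/-- `b ⊗ b' ↦ r(b,b')(x)`. -/
noncomputable def rHat (S : DivBialg k A) (ΔB : B →ₗ[k] B ⊗[k] B) (z : B →ₗ[k] A)
    (x : A) : B ⊗[k] B →ₗ[k] A :=
  hatOf k (sweedCoreR k S.rd (S.mul.compl₁₂ z z)
      (((LinearMap.llcomp k A A A).compl₁₂ (S.mul.flip ∘ₗ z) (S.mul.flip ∘ₗ z)).flip)) ΔB x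

/-- `b ⊗ b' ↦ s(b,b')(x)`. -/
noncomputable def sHat (S : DivBialg k A) (ΔB : B →ₗ[k] B ⊗[k] B) (z : B →ₗ[k] A)
    (x : A) : B ⊗[k] B →ₗ[k] A :=
  hatOf k (sweedCoreR k S.rd (S.mul.compl₁₂ z z)
      ((LinearMap.llcomp k A A A).compl₁₂ (S.mul ∘ₗ z) (S.mul.flip ∘ₗ z))) ΔB x

/-- `b ⊗ b' ↦ l(b,b')(x)`. -/
noncomputable def lHat (S : DivBialg k A) (ΔB : B →ₗ[k] B ⊗[k] B) (z : B →ₗ[k] A)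
    (x : A) : B ⊗[k] B →ₗ[k] A :=
  hatOf k (sweedCoreL k S.ld (S.mul.compl₁₂ z z)
      ((LinearMap.llcomp k A A A).compl₁₂ (S.mul ∘ₗ z) (S.mul ∘ₗ z))) ΔB x

/-- `b ⊗ b' ↦ s̄(b,b')(x)`. -/
noncomputable def sbarHat (S : DivBialg k A) (ΔB : B →ₗ[k] B ⊗[k] B) (z : B →ₗ[k] A)
    (x : A) : B ⊗[k] B →ₗ[k] A :=
  hatOf k (sweedCoreL k S.ld (S.mul.compl₁₂ z z)
      (((LinearMap.llcomp k A A A).compl₁₂ (S.mul.flip ∘ₗ z) (S.mul ∘ₗ z)).flip)) ΔB x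

/-- `b ↦ t(b)(x)`. -/
noncomputable def tHat (S : DivBialg k A) (ΔB : B →ₗ[k] B ⊗[k] B) (z : B →ₗ[k] A)
    (x : A) : B →ₗ[k] A :=
  hat1Of k (sweedCore1L k S.ld z (S.mul.flip ∘ₗ z)) ΔB x

/-- `b ↦ t̄(b)(x)`. -/
noncomputable def tbarHat (S : DivBialg k A) (ΔB : B →ₗ[k] B ⊗[k] B) (z : B →ₗ[k] A)
    (x : A) : B →ₗ[k] A :=
  hat1Of k (sweedCore1R k S.rd z (S.mul ∘ₗ z)) ΔB x

/-- The iterated comultiplication `b ↦ Σ b₍₁₎ ⊗ (b₍₂₎ ⊗ b₍₃₎)`. -/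
noncomputable def comul2 (ΔB : B →ₗ[k] B ⊗[k] B) : B →ₗ[k] B ⊗[k] (B ⊗[k] B) :=
  LinearMap.lTensor B ΔB ∘ₗ ΔB

end FormalLoops

namespace FormalLoops

open Coalgebra

section Convolution

variable {k : Type*} [Field k]
variable {C M N P M' N' P' : Type*} [AddCommGroup C] [Module k C]
  [AddCommGroup M] [Module k M] [AddCommGroup N] [Module k N] [AddCommGroup P] [Module k P]
  [AddCommGroup M'] [Module k M'] [AddCommGroup N'] [Module k N'] [AddCommGroup P'] [Module k P']

/-- The largest subcoalgebra contained in the kernel of a linear map `h` on a cocommutative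
coalgebra is the kernel of `(h ⊗ id) ∘ Δ`. -/
theorem sSup_isSubcoalg_eq_ker [Coalgebra k C] [IsCocomm k C] (h : C →ₗ[k] M) :
    sSup {D : Submodule k C | IsSubcoalg k (comul (R := k) (A := C)) D ∧ ∀ x ∈ D, h x = 0}
      = LinearMap.ker (h.rTensor C ∘ₗ comul) := by
  apply le_antisymm
  · refine sSup_le fun D ⟨hD, hD0⟩ x hx => ?_
    obtain ⟨w, hw⟩ := hD x hx
    have h0 : h ∘ₗ D.subtype = 0 := by ext y; exact hD0 y y.2
    rw [LinearMap.mem_ker, LinearMap.comp_apply, ← hw, LinearMap.rTensor,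
      ← LinearMap.comp_apply, ← TensorProduct.map_comp, h0, TensorProduct.map_zero_left,
      LinearMap.zero_apply]
  · refine le_sSup ⟨fun x hx => ?_, fun x hx => ?_⟩
    · set φ := h.rTensor C ∘ₗ comul (R := k) (A := C) with hφ
      set K := LinearMap.ker φ
      have key : φ.lTensor C (comul x) = 0 := by
        have e1 : ∀ y : (C ⊗[k] C) ⊗[k] C, (h.rTensor C).lTensor C
            (TensorProduct.assoc k C C C ((TensorProduct.comm k C C).toLinearMap.rTensor C y))
            = TensorProduct.leftComm k M C C (h.rTensor (C ⊗[k] C)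
                (TensorProduct.assoc k C C C y)) := by
          intro y
          induction y with
          | zero => simp
          | add a b ha hb => simp only [map_add, ha, hb]
          | tmul a c =>
            induction a with
            | zero => simp
            | add a b ha hb => simp only [map_add, TensorProduct.add_tmul, ha, hb]
            | tmul a b => simp
        have e2 : (comul (R := k) (A := C)).rTensor C (comul x)
            = (TensorProduct.comm k C C).toLinearMap.rTensor C
                ((comul (R := k) (A := C)).rTensor C (comul x)) := by
          rw [← LinearMap.rTensor_comp_apply]
          congr 2
          exact (IsCocomm.comm_comp_comul (R := k) (A := C)).symm
        have e3 : h.rTensor (C ⊗[k] C) ((comul (R := k) (A := C)).lTensor C (comul x)) = 0 := by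
          rw [← LinearMap.comp_apply, LinearMap.rTensor_comp_lTensor,
            ← LinearMap.lTensor_comp_rTensor, LinearMap.comp_apply]
          rw [show h.rTensor C (comul x) = 0 from hx, map_zero]
        rw [hφ, LinearMap.lTensor_comp_apply, ← Coalgebra.coassoc_apply, e2, e1,
          Coalgebra.coassoc_apply, e3, map_zero]
      have key' : φ.rTensor C (comul x) = 0 := by
        rw [← Coalgebra.comm_comul (R := k) x, ← LinearMap.comm_comp_lTensor_comp_comm_eq]
        simp [key]
      obtain ⟨w, hw⟩ := (Module.Flat.lTensor_exact C (LinearMap.exact_subtype_ker_map φ) _).1 key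
      have hw0 : φ.rTensor K w = 0 := by
        apply Module.Flat.lTensor_preserves_injective_linearMap (M := M ⊗[k] C) K.subtype
          K.subtype_injective
        rw [map_zero, ← LinearMap.comp_apply, LinearMap.lTensor_comp_rTensor,
          ← LinearMap.rTensor_comp_lTensor, LinearMap.comp_apply]
        exact hw ▸ key'
      obtain ⟨w', hw'⟩ := (Module.Flat.rTensor_exact K (LinearMap.exact_subtype_ker_map φ) _).1 hw0
      refine ⟨w', ?_⟩
      rw [← hw, ← hw', ← LinearMap.comp_apply, LinearMap.lTensor_comp_rTensor]
    · have e : ∀ y : C ⊗[k] C, TensorProduct.rid k M ((counit (R := k) (A := C)).lTensor M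
          (h.rTensor C y))
          = h (TensorProduct.rid k C ((counit (R := k) (A := C)).lTensor C y)) := by
        intro y
        induction y with
        | zero => simp
        | add a b ha hb => simp only [map_add, ha, hb]
        | tmul a b => simp
      have := e (comul x)
      rw [show h.rTensor C (comul x) = 0 from hx] at this
      simpa using this.symm

/-- The convolution `c ↦ Σ m(f(c₍₁₎), g(c₍₂₎))`. -/
noncomputable def conv [Coalgebra k C] (m : M →ₗ[k] N →ₗ[k] P) (f : C →ₗ[k] M) (g : C →ₗ[k] N) :
    C →ₗ[k] P :=
  TensorProduct.lift m ∘ₗ TensorProduct.map f g ∘ₗ comul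

/-- The map `c ↦ Σ f(c₍₁₎) ⊗ g(c₍₂₎)`. -/
noncomputable def pair [Coalgebra k C] (f : C →ₗ[k] M) (g : C →ₗ[k] N) : C →ₗ[k] M ⊗[k] N :=
  TensorProduct.map f g ∘ₗ comul

/-- The constant map `c ↦ ε(c) x`. -/
noncomputable def const (C : Type*) [AddCommGroup C] [Module k C] [Coalgebra k C] (x : M) :
    C →ₗ[k] M :=
  (counit (R := k) (A := C)).smulRight x

section

variable [Coalgebra k C]

theorem comp_conv {m : M →ₗ[k] N →ₗ[k] P} {m' : M' →ₗ[k] N' →ₗ[k] P'} (φ : P →ₗ[k] P')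
    (φ₁ : M →ₗ[k] M') (φ₂ : N →ₗ[k] N') (h : ∀ u v, φ (m u v) = m' (φ₁ u) (φ₂ v))
    (f : C →ₗ[k] M) (g : C →ₗ[k] N) :
    φ ∘ₗ conv m f g = conv m' (φ₁ ∘ₗ f) (φ₂ ∘ₗ g) := by
  unfold conv
  rw [← LinearMap.comp_assoc, ← LinearMap.comp_assoc, ← LinearMap.comp_assoc]
  congr 1
  ext a b
  simp [h]

theorem conv_const_right (m : M →ₗ[k] N →ₗ[k] P) (f : C →ₗ[k] M) (y : N) :
    conv m f (const C y) = m.flip y ∘ₗ f := by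
  have e : TensorProduct.lift m ∘ₗ TensorProduct.map f (const C y)
      = m.flip y ∘ₗ f ∘ₗ (TensorProduct.rid k C).toLinearMap ∘ₗ
        (counit (R := k) (A := C)).lTensor C := by
    ext a b
    simp [const]
  ext c
  have := LinearMap.congr_fun e (comul c)
  simpa [conv] using this

theorem conv_const_left (m : M →ₗ[k] N →ₗ[k] P) (x : M) (g : C →ₗ[k] N) :
    conv m (const C x) g = m x ∘ₗ g := by
  have e : TensorProduct.lift m ∘ₗ TensorProduct.map (const C x) g
      = m x ∘ₗ g ∘ₗ (TensorProduct.lid k C).toLinearMap ∘ₗ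
        (counit (R := k) (A := C)).rTensor C := by
    ext a b
    simp [const]
  ext c
  have := LinearMap.congr_fun e (comul c)
  simpa [conv] using this

/-- Left cancellation of a coalgebra morphism under convolution. -/
theorem conv_cancel_left {Δ : M →ₗ[k] M ⊗[k] M} {ε : M →ₗ[k] k}
    {d : M →ₗ[k] P →ₗ[k] N} {m : M →ₗ[k] N →ₗ[k] P}
    (h : ∀ u v, TensorProduct.lift d ((LinearMap.lTensor M (m.flip v)) (Δ u)) = ε u • v)
    {α : C →ₗ[k] M} (hα : Δ ∘ₗ α = pair α α) (hε : ε ∘ₗ α = counit) (g : C →ₗ[k] N) :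
    conv d α (conv m α g) = g := by
  set T : (M ⊗[k] M) ⊗[k] N →ₗ[k] N := TensorProduct.lift d ∘ₗ
    (TensorProduct.lift m).lTensor M ∘ₗ (TensorProduct.assoc k M M N).toLinearMap with hT
  have hTΔ : T ∘ₗ Δ.rTensor N = (TensorProduct.lid k N).toLinearMap ∘ₗ ε.rTensor N := by
    apply TensorProduct.ext'
    intro u v
    have e : ∀ w : M ⊗[k] M, T (w ⊗ₜ v) = TensorProduct.lift d ((m.flip v).lTensor M w) := by
      intro w
      induction w with
      | zero => simp
      | add a b ha hb => simp only [TensorProduct.add_tmul, map_add, ha, hb]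
      | tmul a b => simp [hT]
    simpa [h] using e (Δ u)
  have e1 : ∀ y : (C ⊗[k] C) ⊗[k] C, TensorProduct.lift d (TensorProduct.map α
      (TensorProduct.lift m ∘ₗ TensorProduct.map α g) (TensorProduct.assoc k C C C y))
      = T (TensorProduct.map (TensorProduct.map α α) g y) := by
    intro y
    rw [← LinearEquiv.coe_coe, ← LinearMap.comp_apply, ← LinearMap.comp_apply,
      ← LinearMap.comp_apply]
    congr 1
    ext a b c
    simp [hT]
  have e2 : ∀ y : C ⊗[k] C, T (TensorProduct.map (TensorProduct.map α α) g
        ((comul (R := k) (A := C)).rTensor C y))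
      = g (TensorProduct.lid k C ((counit (R := k) (A := C)).rTensor C y)) := by
    have e3 : T ∘ₗ TensorProduct.map (TensorProduct.map α α) g ∘ₗ
        (comul (R := k) (A := C)).rTensor C = g ∘ₗ (TensorProduct.lid k C).toLinearMap ∘ₗ
          (counit (R := k) (A := C)).rTensor C := by
      rw [LinearMap.map_comp_rTensor, show TensorProduct.map α α ∘ₗ comul = Δ ∘ₗ α from hα.symm,
        ← LinearMap.rTensor_comp_map, ← LinearMap.comp_assoc, hTΔ, ← hε]
      ext a b
      simp
    exact fun y => LinearMap.congr_fun e3 y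
  ext c
  have e4 := e1 ((comul (R := k) (A := C)).rTensor C (comul c))
  rw [e2, Coalgebra.coassoc_apply, LinearMap.lTensor,
    ← LinearMap.comp_apply (f := TensorProduct.map α _), ← TensorProduct.map_comp] at e4
  simpa [conv, LinearMap.comp_assoc] using e4

end

section Cocomm

variable [Coalgebra k C] [IsCocomm k C]

theorem conv_flip (m : M →ₗ[k] N →ₗ[k] P) (f : C →ₗ[k] M) (g : C →ₗ[k] N) :
    conv m.flip g f = conv m f g := by
  have e : TensorProduct.lift m.flip ∘ₗ TensorProduct.map g f ∘ₗ
      (TensorProduct.comm k C C).toLinearMap = TensorProduct.lift m ∘ₗ TensorProduct.map f g := by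
    ext a b
    simp
  ext c
  have := LinearMap.congr_fun e (comul c)
  simpa [conv] using this

theorem comul_comp_comul_interchange (c : C) :
    TensorProduct.tensorTensorTensorComm k C C C C
      (TensorProduct.map comul comul (comul (R := k) c))
      = TensorProduct.map comul comul (comul (R := k) c) :=
  (LinearMap.congr_fun (comulCoalgHom k C).map_comp_comul c).symm

theorem conv_map₂_pair (m : M →ₗ[k] N →ₗ[k] P) (m' : M' →ₗ[k] N' →ₗ[k] P')
    (f : C →ₗ[k] M) (f' : C →ₗ[k] M') (g : C →ₗ[k] N) (g' : C →ₗ[k] N') :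
    conv (TensorProduct.map₂ m m') (pair f f') (pair g g') = pair (conv m f g) (conv m' f' g') := by
  have e : ∀ y : (C ⊗[k] C) ⊗[k] (C ⊗[k] C),
      TensorProduct.lift (TensorProduct.map₂ m m')
        (TensorProduct.map (TensorProduct.map f f') (TensorProduct.map g g') y)
      = TensorProduct.map (TensorProduct.lift m ∘ₗ TensorProduct.map f g)
          (TensorProduct.lift m' ∘ₗ TensorProduct.map f' g')
          (TensorProduct.tensorTensorTensorComm k C C C C y) := by
    intro y
    rw [← LinearEquiv.coe_coe, ← LinearMap.comp_apply, ← LinearMap.comp_apply]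
    congr 1
    ext a b c d
    simp
  ext c
  have h := e (TensorProduct.map comul comul (comul (R := k) c))
  rw [comul_comp_comul_interchange] at h
  simpa only [conv, pair, LinearMap.comp_apply, TensorProduct.map_comp] using h

end Cocomm

end Convolution

section Bialgebra

variable {k : Type*} [Field k]
variable {A B C : Type*} [AddCommGroup A] [Module k A] [AddCommGroup B] [Module k B]
  [AddCommGroup C] [Module k C]

/-- The coalgebra underlying a bialgebra with divisions. -/
@[reducible]
noncomputable def DivBialg.toCoalgebra (S : DivBialg k A) : Coalgebra k A where
  comul := S.Δ
  counit := S.ε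
  coassoc := LinearMap.ext S.coassoc
  rTensor_counit_comp_comul := by
    ext u
    apply (TensorProduct.lid k A).injective
    simpa using S.counit_left u
  lTensor_counit_comp_comul := by
    ext u
    apply (TensorProduct.rid k A).injective
    simpa using S.counit_right u

theorem DivBialg.isCocomm (S : DivBialg k A) :
    @IsCocomm k A _ _ _ S.toCoalgebra :=
  let := S.toCoalgebra
  { comm_comp_comul := LinearMap.ext S.cocomm }

section Membership

variable {SA : DivBialg k A} {SB : DivBialg k B} {π : A →ₗ[k] B}

theorem mem_Fsub_iff {oneB : B} {x : A} :
    x ∈ Fsub k SA oneB π ↔ π.rTensor A (SA.Δ x) = oneB ⊗ₜ x := by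
  let := SA.toCoalgebra
  have := SA.isCocomm
  have h := sSup_isSubcoalg_eq_ker (π - SA.ε.smulRight oneB)
  have e : Fsub k SA oneB π = LinearMap.ker ((π - SA.ε.smulRight oneB).rTensor A ∘ₗ SA.Δ) := by
    rw [← show _ = LinearMap.ker ((π - SA.ε.smulRight oneB).rTensor A ∘ₗ SA.Δ) from h]
    simp only [Fsub, LinearMap.sub_apply, LinearMap.smulRight_apply, sub_eq_zero]
    rfl
  have e1 : ∀ y : A ⊗[k] A, (SA.ε.smulRight oneB).rTensor A y
      = oneB ⊗ₜ[k] TensorProduct.lid k A (SA.ε.rTensor A y) := by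
    intro y
    induction y with
    | zero => simp
    | add a b ha hb => simp only [map_add, TensorProduct.tmul_add, ha, hb]
    | tmul a b => simp [TensorProduct.smul_tmul]
  rw [e, LinearMap.mem_ker, LinearMap.comp_apply, LinearMap.rTensor_sub, LinearMap.sub_apply,
    sub_eq_zero, e1, SA.counit_left]

theorem mem_pbSub_iff {t : A ⊗[k] A} :
    t ∈ pbSub k SA π ↔ (pbFst k SA π).rTensor (A ⊗[k] A) (tcomul k SA t)
      = (pbSnd k SA π).rTensor (A ⊗[k] A) (tcomul k SA t) := by
  let := SA.toCoalgebra
  have := SA.isCocomm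
  have h := sSup_isSubcoalg_eq_ker (C := A ⊗[k] A) (pbFst k SA π - pbSnd k SA π)
  have e : pbSub k SA π = LinearMap.ker
      ((pbFst k SA π - pbSnd k SA π).rTensor (A ⊗[k] A) ∘ₗ tcomul k SA) := by
    rw [← show _ = LinearMap.ker
      ((pbFst k SA π - pbSnd k SA π).rTensor (A ⊗[k] A) ∘ₗ tcomul k SA) from h]
    simp only [pbSub, LinearMap.sub_apply, sub_eq_zero]
    rfl
  rw [e, LinearMap.mem_ker, LinearMap.comp_apply, LinearMap.rTensor_sub, LinearMap.sub_apply,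
    sub_eq_zero]

theorem rTensor_map₂ {M N : Type*} [AddCommGroup M] [Module k M] [AddCommGroup N] [Module k N]
    {m : M →ₗ[k] M →ₗ[k] M} {m' : B →ₗ[k] B →ₗ[k] B} {φ : M →ₗ[k] B}
    (h : ∀ u v, φ (m u v) = m' (φ u) (φ v)) (n : N →ₗ[k] N →ₗ[k] N) (w w' : M ⊗[k] N) :
    φ.rTensor N (TensorProduct.map₂ m n w w')
      = TensorProduct.map₂ m' n (φ.rTensor N w) (φ.rTensor N w') := by
  induction w with
  | zero => simp
  | add a b ha hb => simp only [map_add, LinearMap.add_apply, ha, hb]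
  | tmul a b =>
    induction w' with
    | zero => simp
    | add a b ha hb => simp only [map_add, ha, hb]
    | tmul c d => simp [h]

theorem tensorTensorTensorComm_map₂ (m : A →ₗ[k] A →ₗ[k] A) (a a' b b' : A ⊗[k] A) :
    TensorProduct.tensorTensorTensorComm k A A A A
        (TensorProduct.map₂ m m a a' ⊗ₜ TensorProduct.map₂ m m b b')
      = TensorProduct.map₂ (TensorProduct.map₂ m m) (TensorProduct.map₂ m m)
          (TensorProduct.tensorTensorTensorComm k A A A A (a ⊗ₜ b))
          (TensorProduct.tensorTensorTensorComm k A A A A (a' ⊗ₜ b')) := by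
  induction a with
  | zero => simp
  | add x y hx hy => simp only [map_add, LinearMap.add_apply, TensorProduct.add_tmul, hx, hy]
  | tmul a₁ a₂ =>
    induction a' with
    | zero => simp
    | add x y hx hy => simp only [map_add, TensorProduct.add_tmul, hx, hy]
    | tmul a₃ a₄ =>
      induction b with
      | zero => simp
      | add x y hx hy => simp only [map_add, LinearMap.add_apply, TensorProduct.tmul_add, hx, hy]
      | tmul b₁ b₂ =>
        induction b' with
        | zero => simp
        | add x y hx hy => simp only [map_add, TensorProduct.tmul_add, hx, hy]
        | tmul b₃ b₄ => simp

theorem tcomul_map₂_mul (t t' : A ⊗[k] A) :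
    tcomul k SA (TensorProduct.map₂ SA.mul SA.mul t t')
      = TensorProduct.map₂ (TensorProduct.map₂ SA.mul SA.mul) (TensorProduct.map₂ SA.mul SA.mul)
          (tcomul k SA t) (tcomul k SA t') := by
  induction t with
  | zero => simp
  | add x y hx hy => simp only [map_add, LinearMap.add_apply, hx, hy]
  | tmul u v =>
    induction t' with
    | zero => simp
    | add x y hx hy => simp only [map_add, hx, hy]
    | tmul u' v' => simp [tcomul, SA.Δ_mul, tensorTensorTensorComm_map₂]

theorem pbFst_map₂_mul (hπ : DivBialgHom k SA SB π) (t t' : A ⊗[k] A) :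
    pbFst k SA π (TensorProduct.map₂ SA.mul SA.mul t t')
      = SB.mul (pbFst k SA π t) (pbFst k SA π t') := by
  induction t with
  | zero => simp
  | add x y hx hy => simp only [map_add, LinearMap.add_apply, hx, hy]
  | tmul u v =>
    induction t' with
    | zero => simp
    | add x y hx hy => simp only [map_add, hx, hy]
    | tmul u' v' => simp [pbFst, SA.ε_mul, hπ.map_mul, smul_smul, mul_comm]

theorem pbSnd_map₂_mul (hπ : DivBialgHom k SA SB π) (t t' : A ⊗[k] A) :
    pbSnd k SA π (TensorProduct.map₂ SA.mul SA.mul t t')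
      = SB.mul (pbSnd k SA π t) (pbSnd k SA π t') := by
  induction t with
  | zero => simp
  | add x y hx hy => simp only [map_add, LinearMap.add_apply, hx, hy]
  | tmul u v =>
    induction t' with
    | zero => simp
    | add x y hx hy => simp only [map_add, hx, hy]
    | tmul u' v' => simp [pbSnd, SA.ε_mul, hπ.map_mul, smul_smul, mul_comm]

theorem map₂_mul_mem_pbSub (hπ : DivBialgHom k SA SB π) {t t' : A ⊗[k] A}
    (ht : t ∈ pbSub k SA π) (ht' : t' ∈ pbSub k SA π) :
    TensorProduct.map₂ SA.mul SA.mul t t' ∈ pbSub k SA π := by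
  rw [mem_pbSub_iff] at ht ht' ⊢
  rw [tcomul_map₂_mul, rTensor_map₂ (pbFst_map₂_mul (SB := SB) hπ),
    rTensor_map₂ (pbSnd_map₂_mul (SB := SB) hπ), ht, ht']

theorem tmul_mem_pbSub {oneB : B} {x y : A} (hx : x ∈ Fsub k SA oneB π)
    (hy : y ∈ Fsub k SA oneB π) : x ⊗ₜ y ∈ pbSub k SA π := by
  rw [mem_Fsub_iff] at hx hy
  have e1 : ∀ a b : A ⊗[k] A, (pbFst k SA π).rTensor (A ⊗[k] A)
      (TensorProduct.tensorTensorTensorComm k A A A A (a ⊗ₜ b))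
      = TensorProduct.assoc k B A A (π.rTensor A a ⊗ₜ
          TensorProduct.lid k A (SA.ε.rTensor A b)) := by
    intro a b
    induction a with
    | zero => simp
    | add x y hx hy => simp only [map_add, TensorProduct.add_tmul, hx, hy]
    | tmul a₁ a₂ =>
      induction b with
      | zero => simp
      | add x y hx hy => simp only [map_add, TensorProduct.tmul_add, hx, hy]
      | tmul b₁ b₂ => simp [pbFst, TensorProduct.smul_tmul']
  have e2 : ∀ a b : A ⊗[k] A, (pbSnd k SA π).rTensor (A ⊗[k] A)
      (TensorProduct.tensorTensorTensorComm k A A A A (a ⊗ₜ b))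
      = TensorProduct.leftComm k A B A (TensorProduct.lid k A (SA.ε.rTensor A a) ⊗ₜ
          π.rTensor A b) := by
    intro a b
    induction a with
    | zero => simp
    | add x y hx hy => simp only [map_add, TensorProduct.add_tmul, hx, hy]
    | tmul a₁ a₂ =>
      induction b with
      | zero => simp
      | add x y hx hy => simp only [map_add, TensorProduct.tmul_add, hx, hy]
      | tmul b₁ b₂ =>
        simp only [TensorProduct.tensorTensorTensorComm_tmul, LinearMap.rTensor_tmul, pbSnd,
          LinearMap.comp_apply, TensorProduct.map_tmul, LinearEquiv.coe_coe,
          TensorProduct.lid_tmul, TensorProduct.leftComm_tmul, TensorProduct.smul_tmul,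
          TensorProduct.smul_tmul']
  rw [mem_pbSub_iff, tcomul, LinearMap.comp_apply, TensorProduct.map_tmul, LinearEquiv.coe_coe,
    e1, e2, hx, hy, SA.counit_left, SA.counit_left]
  simp

/-- The diagonal map `b ↦ Σ z(b₍₁₎) ⊗ z(b₍₂₎)` takes values in the pullback. -/
theorem map_Δ_mem_pbSub {z : B →ₗ[k] A} (hz : DivBialgHom k SB SA z)
    (hsec : π ∘ₗ z = LinearMap.id) (b : B) :
    TensorProduct.map z z (SB.Δ b) ∈ pbSub k SA π := by
  let := SB.toCoalgebra
  have := SB.isCocomm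
  have hΔ : SA.Δ ∘ₗ z = TensorProduct.map z z ∘ₗ comul := (LinearMap.ext hz.map_Δ).symm
  have hε : SA.ε ∘ₗ z = counit := LinearMap.ext hz.map_ε
  have h1 : tcomul k SA (TensorProduct.map z z (SB.Δ b))
      = TensorProduct.map (TensorProduct.map z z ∘ₗ comul) (TensorProduct.map z z ∘ₗ comul)
          (comul (R := k) b) := by
    have h2 := comul_comp_comul_interchange (k := k) b
    have h3 : ∀ y : (B ⊗[k] B) ⊗[k] (B ⊗[k] B),
        TensorProduct.tensorTensorTensorComm k A A A A
          (TensorProduct.map (TensorProduct.map z z) (TensorProduct.map z z) y)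
        = TensorProduct.map (TensorProduct.map z z) (TensorProduct.map z z)
          (TensorProduct.tensorTensorTensorComm k B B B B y) := by
      intro y
      simp only [← LinearEquiv.coe_coe]
      rw [← LinearMap.comp_apply, ← LinearMap.comp_apply]
      congr 1
      ext
      simp
    rw [TensorProduct.map_comp, LinearMap.comp_apply, ← h2, ← h3, TensorProduct.map_map, ← hΔ,
      TensorProduct.map_comp]
    rfl
  have h4 : pbFst k SA π ∘ₗ TensorProduct.map z z
      = (TensorProduct.rid k B).toLinearMap ∘ₗ (counit (R := k) (A := B)).lTensor B := by
    rw [pbFst, LinearMap.comp_assoc, ← TensorProduct.map_comp, hsec, hε]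
    rfl
  have h5 : pbSnd k SA π ∘ₗ TensorProduct.map z z
      = (TensorProduct.lid k B).toLinearMap ∘ₗ (counit (R := k) (A := B)).rTensor B := by
    rw [pbSnd, LinearMap.comp_assoc, ← TensorProduct.map_comp, hsec, hε]
    rfl
  have h6 : pbFst k SA π ∘ₗ TensorProduct.map z z ∘ₗ comul = LinearMap.id := by
    rw [← LinearMap.comp_assoc, h4]
    ext u
    simp
  have h7 : pbSnd k SA π ∘ₗ TensorProduct.map z z ∘ₗ comul = LinearMap.id := by
    rw [← LinearMap.comp_assoc, h5]
    ext u
    simp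
  rw [mem_pbSub_iff, h1, LinearMap.rTensor, LinearMap.rTensor, TensorProduct.map_map,
    TensorProduct.map_map, h6, h7]

theorem one_mem_Fsub (hπ : DivBialgHom k SA SB π) : SA.one ∈ Fsub k SA SB.one π := by
  rw [mem_Fsub_iff, SA.Δ_one, LinearMap.rTensor_tmul, hπ.map_one]

end Membership
section CoalgebraMaps

variable [Coalgebra k C]

/-- `α : C → A` is a morphism of coalgebras. -/
structure IsCoalgMap (S : DivBialg k A) (α : C →ₗ[k] A) : Prop where
  Δ_comp : S.Δ ∘ₗ α = pair α α
  ε_comp : S.ε ∘ₗ α = counit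

theorem pair_eq_conv {M N : Type*} [AddCommGroup M] [Module k M] [AddCommGroup N] [Module k N]
    (f : C →ₗ[k] M) (g : C →ₗ[k] N) : pair f g = conv (TensorProduct.mk k M N) f g := by
  rw [conv, TensorProduct.lift_mk, LinearMap.id_comp, pair]

theorem IsCoalgMap.hom_comp {SA : DivBialg k A} {SB : DivBialg k B} {z : B →ₗ[k] A}
    (hz : DivBialgHom k SB SA z) {q : C →ₗ[k] B} (hq : IsCoalgMap SB q) :
    IsCoalgMap SA (z ∘ₗ q) where
  Δ_comp := by
    have h : SA.Δ ∘ₗ z = TensorProduct.map z z ∘ₗ SB.Δ := (LinearMap.ext hz.map_Δ).symm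
    rw [← LinearMap.comp_assoc, h, LinearMap.comp_assoc, hq.Δ_comp, pair, pair,
      ← LinearMap.comp_assoc, ← TensorProduct.map_comp]
  ε_comp := by
    rw [← LinearMap.comp_assoc, show SA.ε ∘ₗ z = SB.ε from LinearMap.ext hz.map_ε, hq.ε_comp]

theorem DivBialg.conv_mul_const_one (S : DivBialg k A) (f : C →ₗ[k] A) :
    conv S.mul f (const C S.one) = f := by
  rw [conv_const_right]
  ext c
  exact S.mul_one _

theorem DivBialg.conv_const_one_mul (S : DivBialg k A) (f : C →ₗ[k] A) :
    conv S.mul (const C S.one) f = f := by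
  rw [conv_const_left]
  ext c
  exact S.one_mul _

theorem IsCoalgMap.conv_ld_self {S : DivBialg k B} {a : C →ₗ[k] B} (ha : IsCoalgMap S a) :
    conv S.ld a a = const C S.one := by
  have h := S.conv_mul_const_one a
  conv_lhs => rw [← h]
  rw [h]
  nth_rewrite 2 [← h]
  exact conv_cancel_left S.ld_mul_cancel ha.Δ_comp ha.ε_comp _

/-- The map `f : C → A` satisfies `Σ π(f(c)₍₁₎) ⊗ f(c)₍₂₎ = Σ g(c₍₁₎) ⊗ f(c₍₂₎)`. -/
def Over (SA : DivBialg k A) (π : A →ₗ[k] B) (f : C →ₗ[k] A) (g : C →ₗ[k] B) : Prop :=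
  π.rTensor A ∘ₗ SA.Δ ∘ₗ f = pair g f

variable {SA : DivBialg k A} {SB : DivBialg k B} {π : A →ₗ[k] B}

theorem IsCoalgMap.over {α : C →ₗ[k] A} (hα : IsCoalgMap SA α) :
    Over SA π α (π ∘ₗ α) := by
  rw [Over, hα.Δ_comp, pair, pair, ← LinearMap.comp_assoc, LinearMap.rTensor_comp_map]

theorem over_const {x : A} (hx : x ∈ Fsub k SA SB.one π) :
    Over SA π (const C x) (const C SB.one) := by
  rw [mem_Fsub_iff] at hx
  rw [Over, pair_eq_conv, conv_const_left]
  ext c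
  simp [const, hx]

theorem Over.mem_Fsub {f : C →ₗ[k] A} (hf : Over SA π f (const C SB.one)) (c : C) :
    f c ∈ Fsub k SA SB.one π := by
  rw [Over, pair_eq_conv, conv_const_left] at hf
  exact mem_Fsub_iff.2 (LinearMap.congr_fun hf c)

variable [IsCocomm k C]

theorem conv_cancel_right {S : DivBialg k A} {d m : A →ₗ[k] A →ₗ[k] A}
    (h : ∀ u v, TensorProduct.lift d ((LinearMap.rTensor A (m v)) (S.Δ u)) = S.ε u • v)
    {α : C →ₗ[k] A} (hα : IsCoalgMap S α) (g : C →ₗ[k] A) :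
    conv d (conv m g α) α = g := by
  rw [← conv_flip d, ← conv_flip m]
  refine conv_cancel_left (fun u v => ?_) hα.Δ_comp hα.ε_comp g
  rw [← h u v]
  have e : ∀ w : A ⊗[k] A, TensorProduct.lift d.flip (LinearMap.lTensor A (m.flip.flip v) w)
      = TensorProduct.lift d (LinearMap.rTensor A (m v) (TensorProduct.comm k A A w)) := by
    intro w
    induction w with
    | zero => simp
    | add a b ha hb => simp only [map_add, ha, hb]
    | tmul a b => simp
  rw [e, S.cocomm]

theorem IsCoalgMap.conv_rd_self {S : DivBialg k B} {a : C →ₗ[k] B} (ha : IsCoalgMap S a) :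
    conv S.rd a a = const C S.one := by
  nth_rewrite 1 [← S.conv_const_one_mul a]
  exact conv_cancel_right S.rd_mul_cancel ha _

theorem IsCoalgMap.conv_mul {S : DivBialg k A} {α β : C →ₗ[k] A} (hα : IsCoalgMap S α)
    (hβ : IsCoalgMap S β) : IsCoalgMap S (conv S.mul α β) where
  Δ_comp := by
    rw [comp_conv S.Δ S.Δ S.Δ S.Δ_mul, hα.Δ_comp, hβ.Δ_comp, conv_map₂_pair]
  ε_comp := by
    rw [comp_conv (m' := LinearMap.mul k k) S.ε S.ε S.ε (by simp [S.ε_mul]), hα.ε_comp, hβ.ε_comp]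
    have h : (counit : C →ₗ[k] k) = const C (1 : k) := by ext; simp [const]
    nth_rewrite 1 [h]
    rw [conv_const_left]
    ext
    simp

theorem Over.conv_bilin {m : A →ₗ[k] A →ₗ[k] A} {m' : B →ₗ[k] B →ₗ[k] B}
    (hΔ : ∀ u v, SA.Δ (m u v) = TensorProduct.map₂ m m (SA.Δ u) (SA.Δ v))
    (hm : ∀ u v, π (m u v) = m' (π u) (π v)) {f f' : C →ₗ[k] A} {g g' : C →ₗ[k] B}
    (hf : Over SA π f g) (hf' : Over SA π f' g') :
    Over SA π (conv m f f') (conv m' g g') := by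
  unfold Over at *
  rw [← LinearMap.comp_assoc] at *
  rw [comp_conv (m' := TensorProduct.map₂ m' m) _ (π.rTensor A ∘ₗ SA.Δ) (π.rTensor A ∘ₗ SA.Δ),
    hf, hf', conv_map₂_pair]
  intro u v
  simp only [LinearMap.comp_apply, hΔ, rTensor_map₂ hm]

theorem Over.mul_const (hπ : DivBialgHom k SA SB π) {f : C →ₗ[k] A} {g : C →ₗ[k] B}
    (hf : Over SA π f g) {x : A} (hx : x ∈ Fsub k SA SB.one π) :
    Over SA π (conv SA.mul f (const C x)) g := by
  have h := hf.conv_bilin SA.Δ_mul hπ.map_mul (over_const hx)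
  rwa [SB.conv_mul_const_one] at h

theorem Over.const_mul (hπ : DivBialgHom k SA SB π) {f : C →ₗ[k] A} {g : C →ₗ[k] B}
    (hf : Over SA π f g) {x : A} (hx : x ∈ Fsub k SA SB.one π) :
    Over SA π (conv SA.mul (const C x) f) g := by
  have h := (over_const hx).conv_bilin SA.Δ_mul hπ.map_mul hf
  rwa [SB.conv_const_one_mul] at h

theorem Over.conv_mul (hπ : DivBialgHom k SA SB π) {f f' α β : C →ₗ[k] A}
    (hf : Over SA π f (π ∘ₗ α)) (hf' : Over SA π f' (π ∘ₗ β)) :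
    Over SA π (conv SA.mul f f') (π ∘ₗ conv SA.mul α β) := by
  rw [comp_conv π π π hπ.map_mul]
  exact hf.conv_bilin SA.Δ_mul hπ.map_mul hf'

end CoalgebraMaps

section BoxPlus

variable {SA : DivBialg k A} {SB : DivBialg k B} {π : A →ₗ[k] B} {z : B →ₗ[k] A}

/-- The element `t` lies in the pullback and `⊞ t = a`. -/
def BoxPlusData.Rel (P : BoxPlusData k SA SB π z) (t : A ⊗[k] A) (a : A) : Prop :=
  ∃ h : t ∈ pbSub k SA π, P.bp ⟨t, h⟩ = a

variable {P : BoxPlusData k SA SB π z}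

theorem BoxPlusData.Rel.unique {t : A ⊗[k] A} {a a' : A} (h : P.Rel t a) (h' : P.Rel t a') :
    a = a' :=
  h.2.symm.trans h'.2

theorem BoxPlusData.Rel.smul {t : A ⊗[k] A} {a : A} (h : P.Rel t a) (r : k) :
    P.Rel (r • t) (r • a) :=
  ⟨Submodule.smul_mem _ r h.1, by rw [← h.2, ← map_smul]; rfl⟩

theorem BoxPlusData.Rel.mul (hπ : DivBialgHom k SA SB π) {t t' : A ⊗[k] A} {a a' : A}
    (h : P.Rel t a) (h' : P.Rel t' a') :
    P.Rel (TensorProduct.map₂ SA.mul SA.mul t t') (SA.mul a a') :=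
  ⟨map₂_mul_mem_pbSub hπ h.1 h'.1, by rw [← h.2, ← h'.2]; exact P.bp_mul ⟨t, h.1⟩ ⟨t', h'.1⟩ _⟩

theorem BoxPlusData.rel_of_forall_tmul {M N : Type*} [AddCommGroup M] [Module k M]
    [AddCommGroup N] [Module k N] {Φ : M ⊗[k] N →ₗ[k] A ⊗[k] A} {Ψ : M ⊗[k] N →ₗ[k] A}
    (h : ∀ a b, P.Rel (Φ (a ⊗ₜ b)) (Ψ (a ⊗ₜ b))) (w : M ⊗[k] N) : P.Rel (Φ w) (Ψ w) := by
  induction w with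
  | zero =>
    refine ⟨by simp, ?_⟩
    rw [map_zero Ψ, ← map_zero P.bp]
    exact congrArg P.bp (Subtype.ext (map_zero Φ))
  | tmul a b => exact h a b
  | add x y hx hy =>
    refine ⟨by rw [map_add]; exact Submodule.add_mem _ hx.1 hy.1, ?_⟩
    rw [map_add Ψ, ← hx.2, ← hy.2, ← map_add P.bp]
    exact congrArg P.bp (Subtype.ext (map_add Φ x y))

/-- On `F(A)`, the operation `⊞` is the multiplication. -/
theorem BoxPlusData.rel_tmul (P : BoxPlusData k SA SB π z) (hπ : DivBialgHom k SA SB π)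
    (hz : DivBialgHom k SB SA z) {x y : A}
    (hx : x ∈ Fsub k SA SB.one π) (hy : y ∈ Fsub k SA SB.one π) :
    P.Rel (x ⊗ₜ y) (SA.mul x y) := by
  have h1 := one_mem_Fsub hπ
  have hleft : ∀ u ∈ Fsub k SA SB.one π, (z ∘ₗ π).rTensor A (SA.Δ u) = SA.one ⊗ₜ u := by
    intro u hu
    rw [LinearMap.rTensor_comp_apply, mem_Fsub_iff.1 hu, LinearMap.rTensor_tmul, hz.map_one]
  have hright : (z ∘ₗ π).lTensor A (SA.Δ x) = x ⊗ₜ SA.one := by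
    rw [← SA.cocomm]
    have e : ∀ w : A ⊗[k] A, (z ∘ₗ π).lTensor A (TensorProduct.comm k A A w)
        = TensorProduct.comm k A A ((z ∘ₗ π).rTensor A w) := by
      intro w
      induction w with
      | zero => simp
      | add a b ha hb => simp only [map_add, ha, hb]
      | tmul a b => simp
    rw [e, hleft x hx, TensorProduct.comm_tmul]
  have hx1 : P.Rel (x ⊗ₜ SA.one) x := by
    have h := P.bp_unit_right x
    rw [hright] at h
    exact ⟨tmul_mem_pbSub hx h1, h _⟩
  have hy1 : P.Rel (SA.one ⊗ₜ y) y := by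
    have h := P.bp_unit_left y
    rw [hleft y hy] at h
    exact ⟨tmul_mem_pbSub h1 hy, h _⟩
  simpa [SA.mul_one, SA.one_mul] using hx1.mul hπ hy1

variable [Coalgebra k C]

/-- The map `c ↦ Σ f(c₍₁₎) ⊗ g(c₍₂₎)` takes values in the pullback and its composite with `⊞`
is `h`. -/
def BoxPlusData.RelMap (P : BoxPlusData k SA SB π z) (f g h : C →ₗ[k] A) : Prop :=
  ∀ c, P.Rel (pair f g c) (h c)

theorem BoxPlusData.RelMap.unique {f g h h' : C →ₗ[k] A} (H : P.RelMap f g h)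
    (H' : P.RelMap f g h') : h = h' :=
  LinearMap.ext fun c => (H c).unique (H' c)

theorem BoxPlusData.relMap_const (P : BoxPlusData k SA SB π z) (hπ : DivBialgHom k SA SB π)
    (hz : DivBialgHom k SB SA z) {x y : A}
    (hx : x ∈ Fsub k SA SB.one π) (hy : y ∈ Fsub k SA SB.one π) :
    P.RelMap (const C x) (const C y) (const C (SA.mul x y)) := by
  intro c
  rw [pair_eq_conv, conv_const_left]
  simpa [const] using (P.rel_tmul hπ hz hx hy).smul (counit (R := k) c)

theorem BoxPlusData.relMap_conv_mul (P : BoxPlusData k SA SB π z) (hπ : DivBialgHom k SA SB π)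
    (hz : DivBialgHom k SB SA z) {f g : C →ₗ[k] A} (hf : ∀ c, f c ∈ Fsub k SA SB.one π)
    (hg : ∀ c, g c ∈ Fsub k SA SB.one π) : P.RelMap f g (conv SA.mul f g) := fun c =>
  BoxPlusData.rel_of_forall_tmul (Φ := TensorProduct.map f g)
    (Ψ := TensorProduct.lift SA.mul ∘ₗ TensorProduct.map f g)
    (fun a b => P.rel_tmul hπ hz (hf a) (hg b)) (comul c)

theorem BoxPlusData.relMap_section (P : BoxPlusData k SA SB π z) (hz : DivBialgHom k SB SA z)
    (hsec : π ∘ₗ z = LinearMap.id) {q : C →ₗ[k] B} (hq : IsCoalgMap SB q) :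
    P.RelMap (z ∘ₗ q) (z ∘ₗ q) (z ∘ₗ q) := by
  intro c
  have h1 : pair (z ∘ₗ q) (z ∘ₗ q) c = TensorProduct.map z z (SB.Δ (q c)) := by
    have h := LinearMap.congr_fun hq.Δ_comp c
    simp only [LinearMap.comp_apply] at h
    rw [h, pair, pair, TensorProduct.map_comp]
    rfl
  have h2 : (z ∘ₗ π).lTensor A (SA.Δ (z (q c))) = TensorProduct.map z z (SB.Δ (q c)) := by
    rw [← hz.map_Δ, LinearMap.lTensor, TensorProduct.map_map, LinearMap.comp_assoc, hsec]
    rfl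
  have h3 := P.bp_unit_right (z (q c))
  rw [h2] at h3
  rw [h1]
  exact ⟨map_Δ_mem_pbSub hz hsec _, h3 _⟩

variable [IsCocomm k C]

theorem BoxPlusData.RelMap.mul (hπ : DivBialgHom k SA SB π) {f g h f' g' h' : C →ₗ[k] A}
    (H : P.RelMap f g h) (H' : P.RelMap f' g' h') :
    P.RelMap (conv SA.mul f f') (conv SA.mul g g') (conv SA.mul h h') := by
  intro c
  rw [← conv_map₂_pair]
  exact BoxPlusData.rel_of_forall_tmul
    (Φ := TensorProduct.lift (TensorProduct.map₂ SA.mul SA.mul) ∘ₗ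
      TensorProduct.map (pair f g) (pair f' g'))
    (Ψ := TensorProduct.lift SA.mul ∘ₗ TensorProduct.map h h')
    (fun a b => (H a).mul hπ (H' b)) (comul c)

theorem BoxPlusData.RelMap.conv_ld (hπ : DivBialgHom k SA SB π) (hz : DivBialgHom k SB SA z)
    {α β β' γ : C →ₗ[k] A} (H : P.RelMap β β' γ)
    (hα : IsCoalgMap SA α) (Hα : P.RelMap α α α)
    (hβ : Over SA π β (π ∘ₗ α)) (hβ' : Over SA π β' (π ∘ₗ α)) :
    conv SA.ld α γ = conv SA.mul (conv SA.ld α β) (conv SA.ld α β') := by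
  have mem : ∀ δ : C →ₗ[k] A, Over SA π δ (π ∘ₗ α) →
      ∀ c, conv SA.ld α δ c ∈ Fsub k SA SB.one π := fun δ hδ => by
    have h := Over.conv_bilin SA.Δ_ld hπ.map_ld hα.over hδ
    rw [(hα.hom_comp hπ).conv_ld_self] at h
    exact h.mem_Fsub
  have h := Hα.mul hπ (P.relMap_conv_mul hπ hz (mem β hβ) (mem β' hβ'))
  rw [conv_cancel_left SA.mul_ld_cancel hα.Δ_comp hα.ε_comp,
    conv_cancel_left SA.mul_ld_cancel hα.Δ_comp hα.ε_comp] at h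
  rw [H.unique h, conv_cancel_left SA.ld_mul_cancel hα.Δ_comp hα.ε_comp]

theorem BoxPlusData.RelMap.conv_rd (hπ : DivBialgHom k SA SB π) (hz : DivBialgHom k SB SA z)
    {α β β' γ : C →ₗ[k] A} (H : P.RelMap β β' γ)
    (hα : IsCoalgMap SA α) (Hα : P.RelMap α α α)
    (hβ : Over SA π β (π ∘ₗ α)) (hβ' : Over SA π β' (π ∘ₗ α)) :
    conv SA.rd γ α = conv SA.mul (conv SA.rd β α) (conv SA.rd β' α) := by
  have mem : ∀ δ : C →ₗ[k] A, Over SA π δ (π ∘ₗ α) →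
      ∀ c, conv SA.rd δ α c ∈ Fsub k SA SB.one π := fun δ hδ => by
    have h := Over.conv_bilin SA.Δ_rd hπ.map_rd hδ hα.over
    rw [(hα.hom_comp hπ).conv_rd_self] at h
    exact h.mem_Fsub
  have h := (P.relMap_conv_mul hπ hz (mem β hβ) (mem β' hβ')).mul hπ Hα
  rw [conv_cancel_right SA.mul_rd_cancel hα, conv_cancel_right SA.mul_rd_cancel hα] at h
  rw [H.unique h, conv_cancel_right SA.rd_mul_cancel hα]

end BoxPlus

section Operators

variable [Coalgebra k B]

/-- The projection `b ⊗ b' ↦ ε(b') b`. -/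
noncomputable def tensorFst : B ⊗[k] B →ₗc[k] B :=
  (Coalgebra.TensorProduct.rid k k B : B ⊗[k] k →ₗc[k] B).comp
    (Coalgebra.TensorProduct.map (CoalgHom.id k B) (counitCoalgHom k B))

/-- The projection `b ⊗ b' ↦ ε(b) b'`. -/
noncomputable def tensorSnd : B ⊗[k] B →ₗc[k] B :=
  (Coalgebra.TensorProduct.lid k B : k ⊗[k] B →ₗc[k] B).comp
    (Coalgebra.TensorProduct.map (counitCoalgHom k B) (CoalgHom.id k B))

theorem conv_tensorFst_tensorSnd (m : A →ₗ[k] A →ₗ[k] A) (f g : B →ₗ[k] A) :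
    conv m (f ∘ₗ (tensorFst (k := k) (B := B)).toLinearMap)
        (g ∘ₗ (tensorSnd (k := k) (B := B)).toLinearMap)
      = TensorProduct.lift (m.compl₁₂ f g) := by
  have e : ∀ w w' : B ⊗[k] B, TensorProduct.lift m (TensorProduct.map
      (f ∘ₗ (tensorFst (k := k) (B := B)).toLinearMap)
      (g ∘ₗ (tensorSnd (k := k) (B := B)).toLinearMap)
        (TensorProduct.tensorTensorTensorComm k B B B B (w ⊗ₜ w')))
      = m (f (TensorProduct.rid k B ((counit (R := k) (A := B)).lTensor B w)))
          (g (TensorProduct.lid k B ((counit (R := k) (A := B)).rTensor B w'))) := by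
    intro w w'
    induction w with
    | zero => simp
    | add a b ha hb => simp only [TensorProduct.add_tmul, map_add, LinearMap.add_apply, ha, hb]
    | tmul a b =>
      induction w' with
      | zero => simp
      | add a b ha hb => simp only [TensorProduct.tmul_add, map_add, ha, hb]
      | tmul c d => simp [tensorFst, tensorSnd, smul_smul, mul_comm]
  apply TensorProduct.ext'
  intro b b'
  have h := e (comul b) (comul b')
  simp only [lTensor_counit_comul, rTensor_counit_comul, TensorProduct.rid_tmul,
    TensorProduct.lid_tmul, one_smul] at h
  exact h

theorem hatOf_sweedCoreL (d : A →ₗ[k] A →ₗ[k] A) (α : B →ₗ[k] B →ₗ[k] A)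
    (β : B →ₗ[k] B →ₗ[k] A →ₗ[k] A) (x : A) :
    hatOf k (sweedCoreL k d α β) comul x
      = conv d (TensorProduct.lift α) (TensorProduct.lift (β.compr₂ (LinearMap.applyₗ x))) := by
  have e : ∀ y : (B ⊗[k] B) ⊗[k] (B ⊗[k] B), sweedCoreL k d α β (y ⊗ₜ x)
      = TensorProduct.lift d (TensorProduct.map (TensorProduct.lift α)
          (TensorProduct.lift (β.compr₂ (LinearMap.applyₗ x)))
          (TensorProduct.tensorTensorTensorComm k B B B B y)) := by
    intro y
    rw [← LinearEquiv.coe_coe, ← LinearMap.comp_apply, ← LinearMap.comp_apply,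
      ← TensorProduct.mk_apply, ← LinearMap.flip_apply, ← LinearMap.comp_apply]
    congr 1
    ext
    simp [sweedCoreL]
  ext b b'
  exact e (comul b ⊗ₜ comul b')

theorem hatOf_sweedCoreR (d : A →ₗ[k] A →ₗ[k] A) (α : B →ₗ[k] B →ₗ[k] A)
    (β : B →ₗ[k] B →ₗ[k] A →ₗ[k] A) (x : A) :
    hatOf k (sweedCoreR k d α β) comul x
      = conv d (TensorProduct.lift (β.compr₂ (LinearMap.applyₗ x))) (TensorProduct.lift α) := by
  have e : ∀ y : (B ⊗[k] B) ⊗[k] (B ⊗[k] B), sweedCoreR k d α β (y ⊗ₜ x)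
      = TensorProduct.lift d (TensorProduct.map
          (TensorProduct.lift (β.compr₂ (LinearMap.applyₗ x))) (TensorProduct.lift α)
          (TensorProduct.tensorTensorTensorComm k B B B B y)) := by
    intro y
    rw [← LinearEquiv.coe_coe, ← LinearMap.comp_apply, ← LinearMap.comp_apply,
      ← TensorProduct.mk_apply, ← LinearMap.flip_apply, ← LinearMap.comp_apply]
    congr 1
    ext
    simp [sweedCoreR]
  ext b b'
  exact e (comul b ⊗ₜ comul b')

theorem hat1Of_sweedCore1L (d : A →ₗ[k] A →ₗ[k] A) (γ : B →ₗ[k] A)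
    (δ : B →ₗ[k] A →ₗ[k] A) (x : A) :
    hat1Of k (sweedCore1L k d γ δ) comul x = conv d γ (δ.flip x) := by
  have e : ∀ y : B ⊗[k] B, sweedCore1L k d γ δ (y ⊗ₜ x)
      = TensorProduct.lift d (TensorProduct.map γ (δ.flip x) y) := by
    intro y
    rw [← LinearMap.comp_apply, ← TensorProduct.mk_apply, ← LinearMap.flip_apply,
      ← LinearMap.comp_apply]
    congr 1
    ext
    simp [sweedCore1L]
  ext b
  exact e (comul b)

theorem hat1Of_sweedCore1R (d : A →ₗ[k] A →ₗ[k] A) (γ : B →ₗ[k] A)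
    (δ : B →ₗ[k] A →ₗ[k] A) (x : A) :
    hat1Of k (sweedCore1R k d γ δ) comul x = conv d (δ.flip x) γ := by
  have e : ∀ y : B ⊗[k] B, sweedCore1R k d γ δ (y ⊗ₜ x)
      = TensorProduct.lift d (TensorProduct.map (δ.flip x) γ y) := by
    intro y
    rw [← LinearMap.comp_apply, ← TensorProduct.mk_apply, ← LinearMap.flip_apply,
      ← LinearMap.comp_apply]
    congr 1
    ext
    simp [sweedCore1R]
  ext b
  exact e (comul b)

variable (S : DivBialg k A) (z : B →ₗ[k] A) (x : A)

local notation "p₁" => z ∘ₗ CoalgHom.toLinearMap (tensorFst (k := k) (B := B))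
local notation "p₂" => z ∘ₗ CoalgHom.toLinearMap (tensorSnd (k := k) (B := B))

theorem lHat_eq : lHat k S comul z x = conv S.ld (conv S.mul p₁ p₂)
    (conv S.mul p₁ (conv S.mul p₂ (const (B ⊗[k] B) x))) := by
  rw [lHat, hatOf_sweedCoreL, conv_tensorFst_tensorSnd, conv_const_right, ← LinearMap.comp_assoc,
    conv_tensorFst_tensorSnd]
  congr 1

theorem rHat_eq : rHat k S comul z x = conv S.rd
    (conv S.mul (conv S.mul (const (B ⊗[k] B) x) p₁) p₂) (conv S.mul p₁ p₂) := by
  rw [rHat, hatOf_sweedCoreR, conv_tensorFst_tensorSnd, conv_const_left, ← LinearMap.comp_assoc,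
    conv_tensorFst_tensorSnd]
  congr 1

theorem sHat_eq : sHat k S comul z x = conv S.rd
    (conv S.mul p₁ (conv S.mul (const (B ⊗[k] B) x) p₂)) (conv S.mul p₁ p₂) := by
  rw [sHat, hatOf_sweedCoreR, conv_tensorFst_tensorSnd, conv_const_left, ← LinearMap.comp_assoc,
    conv_tensorFst_tensorSnd]
  congr 1

theorem sbarHat_eq : sbarHat k S comul z x = conv S.ld (conv S.mul p₁ p₂)
    (conv S.mul (conv S.mul p₁ (const (B ⊗[k] B) x)) p₂) := by
  rw [sbarHat, hatOf_sweedCoreL, conv_tensorFst_tensorSnd, conv_const_right,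
    ← LinearMap.comp_assoc, conv_tensorFst_tensorSnd]
  congr 1

theorem tHat_eq : tHat k S comul z x = conv S.ld z (conv S.mul (const B x) z) := by
  rw [tHat, hat1Of_sweedCore1L, conv_const_left]
  congr 1

theorem tbarHat_eq : tbarHat k S comul z x = conv S.rd (conv S.mul z (const B x)) z := by
  rw [tbarHat, hat1Of_sweedCore1R, conv_const_right]
  congr 1

end Operators

end Bialgebra

end FormalLoops

open FormalLoops in
/-- for `φ ∈ {l, r, s, s̄}`,
`φ(b,b')(x·x') = Σ φ(b₍₁₎,b'₍₁₎)x · φ(b₍₂₎,b'₍₂₎)x'`, and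
`t(b)(x·x') = Σ t(b₍₁₎)x · t(b₍₂₎)x'`, `t̄(b)(x·x') = Σ t̄(b₍₁₎)x · t̄(b₍₂₎)x'`
for all `x, x' ∈ F(A)` and `b, b' ∈ B`. -/
theorem ops_multiplicative_on_Fsub
    (k : Type*) [Field k] [CharZero k]
    {A B : Type*} [AddCommGroup A] [Module k A] [AddCommGroup B] [Module k B]
    (SA : DivBialg k A) (SB : DivBialg k B)
    (π : A →ₗ[k] B) (z : B →ₗ[k] A)
    (hπ : DivBialgHom k SA SB π) (hz : DivBialgHom k SB SA z)
    (hsec : π ∘ₗ z = LinearMap.id)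
    (P : BoxPlusData k SA SB π z)
    (F : Submodule k A) (hF : F = Fsub k SA SB.one π) :
    ∀ x ∈ F, ∀ x' ∈ F,
      (∀ b b' : B,
        opL k SA SB.Δ z b b' (SA.mul x x')
          = (TensorProduct.lift SA.mul ∘ₗ
              TensorProduct.map (lHat k SA SB.Δ z x) (lHat k SA SB.Δ z x') ∘ₗ
              (TensorProduct.tensorTensorTensorComm k B B B B).toLinearMap)
            (SB.Δ b ⊗ₜ[k] SB.Δ b') ∧
        opR k SA SB.Δ z b b' (SA.mul x x')
          = (TensorProduct.lift SA.mul ∘ₗ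
              TensorProduct.map (rHat k SA SB.Δ z x) (rHat k SA SB.Δ z x') ∘ₗ
              (TensorProduct.tensorTensorTensorComm k B B B B).toLinearMap)
            (SB.Δ b ⊗ₜ[k] SB.Δ b') ∧
        opS k SA SB.Δ z b b' (SA.mul x x')
          = (TensorProduct.lift SA.mul ∘ₗ
              TensorProduct.map (sHat k SA SB.Δ z x) (sHat k SA SB.Δ z x') ∘ₗ
              (TensorProduct.tensorTensorTensorComm k B B B B).toLinearMap)
            (SB.Δ b ⊗ₜ[k] SB.Δ b') ∧
        opSbar k SA SB.Δ z b b' (SA.mul x x')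
          = (TensorProduct.lift SA.mul ∘ₗ
              TensorProduct.map (sbarHat k SA SB.Δ z x) (sbarHat k SA SB.Δ z x') ∘ₗ
              (TensorProduct.tensorTensorTensorComm k B B B B).toLinearMap)
            (SB.Δ b ⊗ₜ[k] SB.Δ b')) ∧
      (∀ b : B,
        opT k SA SB.Δ z b (SA.mul x x')
          = (TensorProduct.lift SA.mul ∘ₗ
              TensorProduct.map (tHat k SA SB.Δ z x) (tHat k SA SB.Δ z x')) (SB.Δ b) ∧
        opTbar k SA SB.Δ z b (SA.mul x x')
          = (TensorProduct.lift SA.mul ∘ₗ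
              TensorProduct.map (tbarHat k SA SB.Δ z x) (tbarHat k SA SB.Δ z x'))
            (SB.Δ b)) := by
  subst hF
  intro x hx x' hx'
  let := SB.toCoalgebra
  have := SB.isCocomm
  have h₁ : IsCoalgMap SA (z ∘ₗ (tensorFst (k := k) (B := B)).toLinearMap) :=
    IsCoalgMap.hom_comp hz ⟨tensorFst.map_comp_comul.symm, tensorFst.counit_comp⟩
  have h₂ : IsCoalgMap SA (z ∘ₗ (tensorSnd (k := k) (B := B)).toLinearMap) :=
    IsCoalgMap.hom_comp hz ⟨tensorSnd.map_comp_comul.symm, tensorSnd.counit_comp⟩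
  have H₁ : P.RelMap _ _ (z ∘ₗ (tensorFst (k := k) (B := B)).toLinearMap) :=
    P.relMap_section hz hsec ⟨tensorFst.map_comp_comul.symm, tensorFst.counit_comp⟩
  have H₂ : P.RelMap _ _ (z ∘ₗ (tensorSnd (k := k) (B := B)).toLinearMap) :=
    P.relMap_section hz hsec ⟨tensorSnd.map_comp_comul.symm, tensorSnd.counit_comp⟩
  have hz₁ : IsCoalgMap SA z := ⟨(LinearMap.ext hz.map_Δ).symm, LinearMap.ext hz.map_ε⟩
  have Hz : P.RelMap z z z :=
    P.relMap_section (q := LinearMap.id) hz hsec ⟨by rw [pair, TensorProduct.map_id]; rfl, rfl⟩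
  have hα := h₁.conv_mul h₂
  have Hα := H₁.mul hπ H₂
  have K := P.relMap_const (C := B ⊗[k] B) hπ hz hx hx'
  have K' := P.relMap_const (C := B) hπ hz hx hx'
  refine ⟨fun b b' => ⟨?_, ?_, ?_, ?_⟩, fun b => ⟨?_, ?_⟩⟩
  · change lHat k SA Coalgebra.comul z (SA.mul x x') (b ⊗ₜ b')
      = conv SA.mul (lHat k SA Coalgebra.comul z x) (lHat k SA Coalgebra.comul z x') (b ⊗ₜ b')
    simp only [lHat_eq]
    rw [(H₁.mul hπ (H₂.mul hπ K)).conv_ld hπ hz hα Hα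
      (h₁.over.conv_mul hπ (h₂.over.mul_const hπ hx))
      (h₁.over.conv_mul hπ (h₂.over.mul_const hπ hx'))]
  · change rHat k SA Coalgebra.comul z (SA.mul x x') (b ⊗ₜ b')
      = conv SA.mul (rHat k SA Coalgebra.comul z x) (rHat k SA Coalgebra.comul z x') (b ⊗ₜ b')
    simp only [rHat_eq]
    rw [((K.mul hπ H₁).mul hπ H₂).conv_rd hπ hz hα Hα
      ((h₁.over.const_mul hπ hx).conv_mul hπ h₂.over)
      ((h₁.over.const_mul hπ hx').conv_mul hπ h₂.over)]
  · change sHat k SA Coalgebra.comul z (SA.mul x x') (b ⊗ₜ b')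
      = conv SA.mul (sHat k SA Coalgebra.comul z x) (sHat k SA Coalgebra.comul z x') (b ⊗ₜ b')
    simp only [sHat_eq]
    rw [(H₁.mul hπ (K.mul hπ H₂)).conv_rd hπ hz hα Hα
      (h₁.over.conv_mul hπ (h₂.over.const_mul hπ hx))
      (h₁.over.conv_mul hπ (h₂.over.const_mul hπ hx'))]
  · change sbarHat k SA Coalgebra.comul z (SA.mul x x') (b ⊗ₜ b')
      = conv SA.mul (sbarHat k SA Coalgebra.comul z x) (sbarHat k SA Coalgebra.comul z x') (b ⊗ₜ b')
    simp only [sbarHat_eq]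
    rw [((H₁.mul hπ K).mul hπ H₂).conv_ld hπ hz hα Hα
      ((h₁.over.mul_const hπ hx).conv_mul hπ h₂.over)
      ((h₁.over.mul_const hπ hx').conv_mul hπ h₂.over)]
  · change tHat k SA Coalgebra.comul z (SA.mul x x') b
      = conv SA.mul (tHat k SA Coalgebra.comul z x) (tHat k SA Coalgebra.comul z x') b
    simp only [tHat_eq]
    rw [(K'.mul hπ Hz).conv_ld hπ hz hz₁ Hz (hz₁.over.const_mul hπ hx)
      (hz₁.over.const_mul hπ hx')]
  · change tbarHat k SA Coalgebra.comul z (SA.mul x x') b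
      = conv SA.mul (tbarHat k SA Coalgebra.comul z x) (tbarHat k SA Coalgebra.comul z x') b
    simp only [tbarHat_eq]
    rw [(Hz.mul hπ K').conv_rd hπ hz hz₁ Hz (hz₁.over.mul_const hπ hx)
      (hz₁.over.mul_const hπ hx')]
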